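/- Let d ≥ 2 be an integer. Let (M_n(1),…,M_n(m)) be the occupancy counts of the uniform occupancy model with n balls and m urns, let q = 1 − 1/(m−1), and for i ≠ j define c_{n,m}(i,j) = (1 − q^{|M_n(i)−d|}) · 1{M_n(j) = d}. Then there exist an integer n₁, a real r₁ > 0, and a constant C, all depending only on d, such that for all n ≥ n₁ and all m ≥ 2 with r_{n,m} ≥ r₁, Var(Σ_{1 ≤ i,j ≤ m, i≠j} c_{n,m}(i,j)) ≤ C·n·[1 + (n/m)²]. -/

import Mathlib

open MeasureTheory ProbabilityTheory

/-- The uniform occupancy model: `n` balls are placed independently and uniformly at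
random into `m` urns. -/
noncomputable def occ (n m : ℕ) : Measure (Fin n → Fin m) :=
  (Fintype.card (Fin n → Fin m) : ENNReal)⁻¹ • Measure.count

/-- The number of balls in urn `i`. -/
def ballCount {n m : ℕ} (ω : Fin n → Fin m) (i : Fin m) : ℕ :=
  (Finset.univ.filter fun b => ω b = i).card

/-- The number of urns containing exactly `d` balls. -/
def urnCount (d : ℕ) {n m : ℕ} (ω : Fin n → Fin m) : ℕ :=
  (Finset.univ.filter fun i => ballCount ω i = d).card

/-- `μ_{n,m}`, the mean number of urns containing exactly `d` balls. -/
noncomputable def occMean (d n m : ℕ) : ℝ :=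
  ∫ ω, (urnCount d ω : ℝ) ∂(occ n m)


/-- `σ²_{n,m}`, the variance of the number of urns containing exactly `d` balls. -/
noncomputable def occVar (d n m : ℕ) : ℝ :=
  variance (fun ω => (urnCount d ω : ℝ)) (occ n m)

/-- `r_{n,m} = σ_{n,m} / (1 + (n/m)³)`. -/
noncomputable def occR (d n m : ℕ) : ℝ :=
  Real.sqrt (occVar d n m) / (1 + ((n : ℝ) / m) ^ 3)

/-- The summand `c_{n,m}(i,j)` of Lemma 3.3, Equation (3.16), with `q = 1 − 1/(m−1)`. -/
noncomputable def cTerm (d n m : ℕ) (ω : Fin n → Fin m) (i j : Fin m) : ℝ :=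
  if ballCount ω j = d then
    1 - (1 - 1 / ((m : ℝ) - 1)) ^ ((ballCount ω i : ℤ) - (d : ℤ)).natAbs
  else 0

/-!
The terms with `i = j` vanish, so the double sum is a product `A * Y`, where
`A = ∑ i, (1 - q ^ |M_n(i) - d|)` and `Y` is the number of urns containing exactly `d` balls.
Moving a single ball changes `Y` by at most `2` and `A` by at most `2 / (m - 1)`, while `Y ≤ m` and
`|A| ≤ (n + m * d) / (m - 1)`; hence it changes `A * Y` by `O(1 + n / m)`. By the Efron–Stein
inequality the variance of a function of `n` independent variables is at most the sum of the squares
of half its bounded differences, which is `O(n * (1 + n / m) ^ 2)` here.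
-/

open scoped NNReal

section Variance

variable {Ω Ω' : Type*} [MeasurableSpace Ω] [MeasurableSpace Ω']

lemma variance_le_of_abs_sub_le {μ : Measure Ω} [IsProbabilityMeasure μ] {X : Ω → ℝ} {c : ℝ}
    (hX : AEMeasurable X μ) (hc : ∀ x y, |X x - X y| ≤ c) : Var[X; μ] ≤ (c / 2) ^ 2 := by
  have := nonempty_of_isProbabilityMeasure μ
  have hbdd : BddBelow (Set.range X) := by
    obtain ⟨x₀⟩ := this
    refine ⟨X x₀ - c, Set.forall_mem_range.2 fun x => ?_⟩
    linarith [(abs_le.1 (hc x₀ x)).2]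
  have hmem (x : Ω) : X x ∈ Set.Icc (⨅ y, X y) ((⨅ y, X y) + c) :=
    ⟨ciInf_le hbdd x, sub_le_iff_le_add.1 (le_ciInf fun y => by linarith [(abs_le.1 (hc x y)).2])⟩
  simpa only [add_sub_cancel_left] using
    variance_le_sq_of_bounded (Filter.Eventually.of_forall hmem) hX

lemma variance_prod_eq_integral_variance_add_variance_integral {μ : Measure Ω} {ν : Measure Ω'}
    [IsProbabilityMeasure μ] [IsProbabilityMeasure ν] {f : Ω × Ω' → ℝ}
    (hf : MemLp f 2 (μ.prod ν)) :
    Var[f; μ.prod ν]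
      = ∫ x, Var[fun y => f (x, y); ν] ∂μ + Var[fun x => ∫ y, f (x, y) ∂ν; μ] := by
  have hf_sq : Integrable (fun z => f z ^ 2) (μ.prod ν) := hf.integrable_sq
  have hslice : ∀ᵐ x ∂μ, Var[fun y => f (x, y); ν]
      = ∫ y, f (x, y) ^ 2 ∂ν - (∫ y, f (x, y) ∂ν) ^ 2 := by
    filter_upwards [hf.1.prodMk_left, hf_sq.prod_right_ae] with x hx hx_sq
    simpa using! variance_eq_sub ((memLp_two_iff_integrable_sq hx).2 hx_sq)
  have hmean_meas : AEStronglyMeasurable (fun x => ∫ y, f (x, y) ∂ν) μ :=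
    hf.1.integral_prod_right'
  have hmean_sq : Integrable (fun x => (∫ y, f (x, y) ∂ν) ^ 2) μ := by
    refine hf_sq.integral_prod_left.mono' (hmean_meas.pow 2) ?_
    filter_upwards [hslice] with x hx
    rw [Real.norm_of_nonneg (sq_nonneg _)]
    exact sub_nonneg.1 (hx ▸ variance_nonneg _ _)
  have hmean : Var[fun x => ∫ y, f (x, y) ∂ν; μ]
      = ∫ x, (∫ y, f (x, y) ∂ν) ^ 2 ∂μ - (∫ x, ∫ y, f (x, y) ∂ν ∂μ) ^ 2 := by
    simpa using! variance_eq_sub ((memLp_two_iff_integrable_sq hmean_meas).2 hmean_sq)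
  have htotal : Var[f; μ.prod ν]
      = ∫ x, ∫ y, f (x, y) ^ 2 ∂ν ∂μ - (∫ x, ∫ y, f (x, y) ∂ν ∂μ) ^ 2 := by
    rw [variance_eq_sub hf, integral_prod f (hf.integrable one_le_two), ← integral_prod _ hf_sq]
    rfl
  rw [htotal, hmean, integral_congr_ae hslice, integral_sub hf_sq.integral_prod_left hmean_sq]
  ring

end Variance

/-- The bounded differences property (McDiarmid's condition): changing the `i`-th coordinate alone
changes `f` by at most `c i`. It is the hypothesis of the variance bound `variance_pi_le`. -/
def HasBoundedDifferences {ι : Type*} {α : ι → Type*} (f : (∀ i, α i) → ℝ) (c : ι → ℝ) : Prop :=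
  ∀ i ω ω', (∀ j, j ≠ i → ω j = ω' j) → |f ω - f ω'| ≤ c i

namespace HasBoundedDifferences

variable {ι : Type*} {α : ι → Type*} {f g : (∀ i, α i) → ℝ} {a b c : ι → ℝ}

lemma mul (hf : HasBoundedDifferences f a) (hg : HasBoundedDifferences g b) {A B : ℝ}
    (hA : ∀ ω, |f ω| ≤ A) (hB : ∀ ω, |g ω| ≤ B) :
    HasBoundedDifferences (fun ω => f ω * g ω) fun i => A * b i + a i * B := by
  intro i ω ω' h
  calc |f ω * g ω - f ω' * g ω'|
      = |f ω * (g ω - g ω') + (f ω - f ω') * g ω'| := by ring_nf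
    _ ≤ |f ω| * |g ω - g ω'| + |f ω - f ω'| * |g ω'| := by
        simpa only [abs_mul] using abs_add_le (f ω * (g ω - g ω')) ((f ω - f ω') * g ω')
    _ ≤ A * b i + a i * B := by
        gcongr
        exacts [(abs_nonneg _).trans (hA ω), hA ω, hg i ω ω' h,
          (abs_nonneg _).trans (hf i ω ω' h), hf i ω ω' h, hB ω']

lemma abs_sub_le_sum (hf : HasBoundedDifferences f c) (s : Finset ι) {ω ω' : ∀ i, α i}
    (h : ∀ j ∉ s, ω j = ω' j) : |f ω - f ω'| ≤ ∑ i ∈ s, c i := by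
  classical
  induction s using Finset.induction_on generalizing ω with
  | empty => simp [funext fun j => h j (Finset.notMem_empty j)]
  | insert i s hi ih =>
    rw [Finset.sum_insert hi]
    refine (abs_sub_le _ (f (Function.update ω i (ω' i))) _).trans (add_le_add ?_ (ih ?_))
    · exact hf i _ _ fun j hj => (Function.update_of_ne hj _ _).symm
    · intro j hj
      rcases eq_or_ne j i with rfl | hji
      · exact Function.update_self ..
      · rw [Function.update_of_ne hji]
        exact h j (by simp [hji, hj])

variable [∀ i, MeasurableSpace (α i)] {μ : ∀ i, Measure (α i)} [∀ i, IsProbabilityMeasure (μ i)]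

lemma memLp [Fintype ι] (hf : HasBoundedDifferences f c) (hf_meas : Measurable f)
    (p : ENNReal) : MemLp f p (Measure.pi μ) := by
  obtain ⟨ω₀⟩ := nonempty_of_isProbabilityMeasure (Measure.pi μ)
  refine .of_bound hf_meas.aestronglyMeasurable (|f ω₀| + ∑ i, c i) (.of_forall fun ω => ?_)
  have hdiff : |f ω - f ω₀| ≤ ∑ i, c i := hf.abs_sub_le_sum Finset.univ (by simp)
  rw [Real.norm_eq_abs]
  linarith [abs_sub_abs_le_abs_sub (f ω) (f ω₀)]

lemma comp_insertNth {n : ℕ} {α : Fin (n + 1) → Type*} {f : (∀ i, α i) → ℝ} {c : Fin (n + 1) → ℝ}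
    (hf : HasBoundedDifferences f c) (p : Fin (n + 1)) (x : α p) :
    HasBoundedDifferences (fun ω => f (p.insertNth x ω)) fun i => c (p.succAbove i) := by
  refine fun i ω ω' h => hf _ _ _ (p.forall_iff_succAbove.2 ⟨fun _ => ?_, fun j hj => ?_⟩)
  · simp only [Fin.insertNth_apply_same]
  · simpa only [Fin.insertNth_apply_succAbove] using h j (ne_of_apply_ne _ hj)

lemma abs_insertNth_sub_insertNth_le {n : ℕ} {α : Fin (n + 1) → Type*} {f : (∀ i, α i) → ℝ}
    {c : Fin (n + 1) → ℝ} (hf : HasBoundedDifferences f c) (p : Fin (n + 1)) (x y : α p)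
    (ω : ∀ i, α (p.succAbove i)) : |f (p.insertNth x ω) - f (p.insertNth y ω)| ≤ c p := by
  refine hf p _ _ (p.forall_iff_succAbove.2 ⟨fun h => absurd rfl h, fun j _ => ?_⟩)
  simp only [Fin.insertNth_apply_succAbove]

/-- Condition on the first coordinate: the conditional variances are bounded by induction, and the
conditional mean is a function of one variable with oscillation at most `c 0`. -/
lemma variance_pi_fin_le {n : ℕ} {α : Fin n → Type*} [∀ i, MeasurableSpace (α i)]
    {μ : ∀ i, Measure (α i)} [∀ i, IsProbabilityMeasure (μ i)] {f : (∀ i, α i) → ℝ}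
    {c : Fin n → ℝ} (hf : HasBoundedDifferences f c) (hf_meas : Measurable f) :
    Var[f; Measure.pi μ] ≤ ∑ i, (c i / 2) ^ 2 := by
  induction n with
  | zero =>
    exact (variance_le_of_abs_sub_le hf_meas.aemeasurable fun ω ω' =>
      hf.abs_sub_le_sum Finset.univ (by simp)).trans_eq (by simp)
  | succ n ih =>
    set ν := Measure.pi fun j => μ (Fin.succAbove 0 j)
    let F : α 0 → (∀ j, α (Fin.succAbove 0 j)) → ℝ := fun x ω => f (Fin.insertNth 0 x ω)
    have hins : MeasurePreserving (MeasurableEquiv.piFinSuccAbove α 0).symm ((μ 0).prod ν)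
        (Measure.pi μ) := (measurePreserving_piFinSuccAbove μ 0).symm
    have hF_memLp : MemLp (fun z => F z.1 z.2) 2 ((μ 0).prod ν) :=
      (hf.memLp hf_meas 2).comp_measurePreserving hins
    have hF_meas : Measurable fun z : α 0 × _ => F z.1 z.2 := hf_meas.comp hins.measurable
    have hcond_var (x : α 0) : Var[F x; ν] ≤ ∑ i, (c (Fin.succAbove 0 i) / 2) ^ 2 :=
      ih (hf.comp_insertNth 0 x) (hF_meas.comp measurable_prodMk_left)
    have hF_int (x : α 0) : Integrable (F x) ν :=
      memLp_one_iff_integrable.1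
        ((hf.comp_insertNth 0 x).memLp (hF_meas.comp measurable_prodMk_left) 1)
    have hmean_osc (x y : α 0) : |∫ ω, F x ω ∂ν - ∫ ω, F y ω ∂ν| ≤ c 0 := by
      rw [← integral_sub (hF_int x) (hF_int y)]
      have hpt : ∀ᵐ ω ∂ν, ‖F x ω - F y ω‖ ≤ c 0 :=
        .of_forall (hf.abs_insertNth_sub_insertNth_le 0 x y)
      exact (norm_integral_le_of_norm_le_const hpt).trans_eq (by rw [probReal_univ, mul_one])
    have hmean_var : Var[fun x => ∫ ω, F x ω ∂ν; μ 0] ≤ (c 0 / 2) ^ 2 :=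
      variance_le_of_abs_sub_le hF_memLp.1.integral_prod_right'.aemeasurable hmean_osc
    calc Var[f; Measure.pi μ] = Var[fun z => F z.1 z.2; (μ 0).prod ν] :=
          (hins.variance_fun_comp hf_meas.aemeasurable).symm
      _ = ∫ x, Var[F x; ν] ∂μ 0 + Var[fun x => ∫ ω, F x ω ∂ν; μ 0] :=
          variance_prod_eq_integral_variance_add_variance_integral hF_memLp
      _ ≤ ∑ i, (c (Fin.succAbove 0 i) / 2) ^ 2 + (c 0 / 2) ^ 2 := by
          refine add_le_add ?_ hmean_var
          simpa using integral_mono_of_nonneg (.of_forall fun x => variance_nonneg _ _)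
            (integrable_const _) (.of_forall hcond_var) (μ := μ 0)
      _ = ∑ i, (c i / 2) ^ 2 := by rw [Fin.sum_univ_succAbove _ 0, add_comm]

lemma variance_pi_le [Fintype ι] (hf : HasBoundedDifferences f c) (hf_meas : Measurable f) :
    Var[f; Measure.pi μ] ≤ ∑ i, (c i / 2) ^ 2 := by
  let e : Fin (Fintype.card ι) ≃ ι := (Fintype.equivFin ι).symm
  have he := measurePreserving_piCongrLeft μ e
  have hfe : HasBoundedDifferences (fun ω => f (MeasurableEquiv.piCongrLeft α e ω)) (c ∘ e) := by
    refine fun i ω ω' h => hf (e i) _ _ (e.forall_congr_right.1 fun j hj => ?_)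
    simpa only [MeasurableEquiv.coe_piCongrLeft, Equiv.piCongrLeft_apply_apply]
      using h j (ne_of_apply_ne e hj)
  calc Var[f; Measure.pi μ] = Var[fun ω => f (MeasurableEquiv.piCongrLeft α e ω); _] :=
        (he.variance_fun_comp hf_meas.aemeasurable).symm
    _ ≤ ∑ j, (c (e j) / 2) ^ 2 := hfe.variance_pi_fin_le (hf_meas.comp he.measurable)
    _ = ∑ i, (c i / 2) ^ 2 := e.sum_comp fun i => (c i / 2) ^ 2

end HasBoundedDifferences

section Lipschitz

lemma lipschitzWith_of_dist_succ_le {X : Type*} [PseudoMetricSpace X] {φ : ℕ → X} {K : ℝ≥0}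
    (h : ∀ k, dist (φ k) (φ (k + 1)) ≤ K) : LipschitzWith K φ := by
  refine .of_dist_le_mul fun k l => ?_
  wlog hkl : k ≤ l generalizing k l
  · rw [dist_comm, dist_comm k]
    exact this l k (le_of_not_ge hkl)
  calc dist (φ k) (φ l) ≤ ∑ _i ∈ Finset.Ico k l, (K : ℝ) :=
        dist_le_Ico_sum_of_dist_le hkl fun _ _ => h _
    _ = K * dist k l := by
        rw [Finset.sum_const, Nat.card_Ico, nsmul_eq_mul, mul_comm, dist_comm, Nat.dist_eq,
          ← Nat.cast_sub hkl, Nat.abs_cast]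

lemma lipschitzWith_ite_eq (d : ℕ) : LipschitzWith 1 fun k : ℕ => if k = d then (1 : ℝ) else 0 :=
  lipschitzWith_of_dist_succ_le fun k => by
    rw [Real.dist_eq]
    split_ifs <;> norm_num

lemma lipschitzWith_natAbs_sub (d : ℕ) : LipschitzWith 1 fun k : ℕ => ((k : ℤ) - d).natAbs :=
  .mk_one fun k l => by
    simp only [Nat.dist_eq, Nat.cast_natAbs, Int.cast_abs, Int.cast_sub, Int.cast_natCast]
    simpa only [sub_sub_sub_cancel_right] using abs_abs_sub_abs_le ((k : ℝ) - d) ((l : ℝ) - d)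

lemma lipschitzWith_one_sub_pow {p : ℝ≥0} (hp : p ≤ 1) :
    LipschitzWith p fun k : ℕ => (1 - (p : ℝ)) ^ k := by
  have hp' : (p : ℝ) ≤ 1 := hp
  refine lipschitzWith_of_dist_succ_le fun k => ?_
  calc dist ((1 - (p : ℝ)) ^ k) ((1 - (p : ℝ)) ^ (k + 1)) = (1 - (p : ℝ)) ^ k * p := by
        rw [Real.dist_eq, pow_succ, ← mul_one_sub, sub_sub_cancel,
          abs_of_nonneg (mul_nonneg (pow_nonneg (sub_nonneg.2 hp') k) p.coe_nonneg)]
    _ ≤ p := mul_le_of_le_one_left p.coe_nonneg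
        (pow_le_one₀ (sub_nonneg.2 hp') (sub_le_self 1 p.coe_nonneg))

/-- The probability that at least one of `|k - d|` independent trials of success probability `p`
succeeds: for `p = 1 / (m - 1)` and `k = M_n(i)`, the factor `1 - q ^ |M_n(i) - d|` of
`c_{n,m}(i, j)`. -/
def hitProb (p : ℝ) (d k : ℕ) : ℝ :=
  1 - (1 - p) ^ ((k : ℤ) - d).natAbs

lemma hitProb_self (p : ℝ) (d : ℕ) : hitProb p d d = 0 := by
  simp [hitProb]

lemma lipschitzWith_hitProb {p : ℝ≥0} (hp : p ≤ 1) (d : ℕ) : LipschitzWith p (hitProb p d) := by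
  have hpow := (lipschitzWith_one_sub_pow hp).comp (lipschitzWith_natAbs_sub d)
  have hsub := (LipschitzWith.const (1 : ℝ)).sub hpow
  rwa [zero_add, mul_one] at hsub

lemma abs_hitProb_le {p : ℝ≥0} (hp : p ≤ 1) (d k : ℕ) : |hitProb p d k| ≤ p * (k + d) := by
  calc |hitProb p d k| ≤ p * |(k : ℝ) - d| := by
        simpa only [hitProb_self, Real.dist_eq, Nat.dist_eq, sub_zero] using
          (lipschitzWith_hitProb hp d).dist_le_mul k d
    _ ≤ p * (k + d) := by
        gcongr
        simpa only [Nat.abs_cast] using abs_sub (k : ℝ) d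

end Lipschitz

section Occupancy

variable {n m : ℕ}

lemma occ_eq_pi_uniformOn (n m : ℕ) :
    occ n m = Measure.pi fun _ : Fin n => uniformOn (Set.univ : Set (Fin m)) := by
  rw [← uniformOn_pi, Set.pi_univ, occ, uniformOn, ProbabilityTheory.cond, Measure.restrict_univ,
    Measure.count_univ, ENat.card_eq_coe_fintype_card, ENat.toENNReal_coe]

lemma variance_occ_le (hm : 0 < m) {f : (Fin n → Fin m) → ℝ} {c : ℝ}
    (hf : HasBoundedDifferences f fun _ => c) : Var[f; occ n m] ≤ n * (c / 2) ^ 2 := by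
  have : Nonempty (Fin m) := ⟨⟨0, hm⟩⟩
  have : IsProbabilityMeasure (uniformOn (Set.univ : Set (Fin m))) :=
    isProbabilityMeasure_uniformOn Set.finite_univ Set.univ_nonempty
  rw [occ_eq_pi_uniformOn]
  simpa using hf.variance_pi_le (μ := fun _ => uniformOn Set.univ) .of_discrete

lemma ballCount_eq_sum (ω : Fin n → Fin m) (i : Fin m) :
    (ballCount ω i : ℝ) = ∑ b, if ω b = i then 1 else 0 := by
  simp [ballCount]

lemma sum_ballCount (ω : Fin n → Fin m) : ∑ i, (ballCount ω i : ℝ) = n := by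
  simp only [ballCount_eq_sum]
  rw [Finset.sum_comm]
  simp

lemma urnCount_eq_sum (d : ℕ) (ω : Fin n → Fin m) :
    (urnCount d ω : ℝ) = ∑ j, if ballCount ω j = d then 1 else 0 := by
  simp [urnCount]

lemma urnCount_le (d : ℕ) (ω : Fin n → Fin m) : urnCount d ω ≤ m :=
  (Finset.card_le_univ _).trans_eq (Fintype.card_fin m)

lemma dist_ballCount_le {ω ω' : Fin n → Fin m} {b : Fin n} (h : ∀ a, a ≠ b → ω a = ω' a)
    (i : Fin m) :
    dist (ballCount ω i) (ballCount ω' i)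
      ≤ (if ω b = i then 1 else 0) + if ω' b = i then 1 else 0 := by
  rw [Nat.dist_eq, ballCount_eq_sum, ballCount_eq_sum, ← Finset.sum_sub_distrib,
    Fintype.sum_eq_single b fun a hab => by rw [h a hab, sub_self]]
  split_ifs <;> norm_num

lemma hasBoundedDifferences_sum_ballCount {φ : ℕ → ℝ} {K : ℝ≥0} (hφ : LipschitzWith K φ) :
    HasBoundedDifferences (fun ω : Fin n → Fin m => ∑ i, φ (ballCount ω i))
      fun _ => (2 * K : ℝ) := by
  intro b ω ω' h
  calc |∑ i, φ (ballCount ω i) - ∑ i, φ (ballCount ω' i)|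
    _ ≤ ∑ i, dist (φ (ballCount ω i)) (φ (ballCount ω' i)) :=
        dist_sum_sum_le Finset.univ (fun i => φ (ballCount ω i)) fun i => φ (ballCount ω' i)
    _ ≤ ∑ i, (K : ℝ) * ((if ω b = i then 1 else 0) + if ω' b = i then 1 else 0) :=
        Finset.sum_le_sum fun i _ => hφ.dist_le_mul_of_le (dist_ballCount_le h i)
    _ = 2 * K := by
        rw [← Finset.mul_sum, Finset.sum_add_distrib, Fintype.sum_ite_eq, Fintype.sum_ite_eq]
        ring

lemma hasBoundedDifferences_urnCount (d : ℕ) :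
    HasBoundedDifferences (fun ω : Fin n → Fin m => (urnCount d ω : ℝ)) fun _ => 2 := by
  simpa [urnCount_eq_sum] using hasBoundedDifferences_sum_ballCount (lipschitzWith_ite_eq d)

lemma abs_sum_hitProb_le {p : ℝ≥0} (hp : p ≤ 1) (d : ℕ) (ω : Fin n → Fin m) :
    |∑ i, hitProb p d (ballCount ω i)| ≤ p * (n + m * d) := by
  calc |∑ i, hitProb p d (ballCount ω i)| ≤ ∑ i, p * ((ballCount ω i : ℝ) + d) :=
        (Finset.abs_sum_le_sum_abs _ _).trans (Finset.sum_le_sum fun _ _ => abs_hitProb_le hp d _)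
    _ = p * (n + m * d) := by
        rw [← Finset.mul_sum, Finset.sum_add_distrib, sum_ballCount, Fin.sum_const, nsmul_eq_mul]

lemma variance_sum_hitProb_mul_urnCount_le (hm : 0 < m) {p : ℝ≥0} (hp : p ≤ 1) (d : ℕ) :
    Var[fun ω : Fin n → Fin m => (∑ i, hitProb p d (ballCount ω i)) * urnCount d ω; occ n m]
      ≤ n * (p * (n + m * (d + 1))) ^ 2 := by
  have hbd := (hasBoundedDifferences_sum_ballCount (lipschitzWith_hitProb hp d)).mul
    (hasBoundedDifferences_urnCount (n := n) (m := m) d) (abs_sum_hitProb_le hp d) (B := m)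
    fun ω => by simpa using urnCount_le d ω
  exact (variance_occ_le hm hbd).trans_eq (by ring)

/-- The terms with `i = j` may be included: they vanish, as `hitProb p d d = 0`. -/
lemma sum_cTerm_eq_mul_urnCount (d : ℕ) (ω : Fin n → Fin m) :
    (∑ i : Fin m, ∑ j : Fin m, if i ≠ j then cTerm d n m ω i j else 0)
      = (∑ i, hitProb (1 / ((m : ℝ) - 1)) d (ballCount ω i)) * urnCount d ω := by
  rw [urnCount_eq_sum, Finset.sum_mul_sum]
  refine Finset.sum_congr rfl fun i _ => Finset.sum_congr rfl fun j _ => ?_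
  rw [mul_ite, mul_one, mul_zero]
  rcases eq_or_ne i j with rfl | hij
  · by_cases hi : ballCount ω i = d
    · simp [hi, hitProb_self]
    · simp [hi]
  · rw [if_pos hij, cTerm, hitProb]

theorem variance_cTerm_sum_le_general (d n : ℕ) {m : ℕ} (hm : 2 ≤ m) :
    variance (fun ω : Fin n → Fin m =>
        ∑ i : Fin m, ∑ j : Fin m, if i ≠ j then cTerm d n m ω i j else 0)
      (occ n m)
    ≤ 8 * (d + 1) ^ 2 * n * (1 + ((n : ℝ) / m) ^ 2) := by
  have hm_two : (2 : ℝ) ≤ m := by exact_mod_cast hm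
  have hm_pred : (0 : ℝ) < m - 1 := by linarith
  have hp_one : 1 / ((m : ℝ) - 1) ≤ 1 := (div_le_one hm_pred).2 (by linarith)
  have hpm : 1 / ((m : ℝ) - 1) * m ≤ 2 := by
    rw [one_div_mul_eq_div, div_le_iff₀ hm_pred]
    linarith
  simp only [sum_cTerm_eq_mul_urnCount]
  lift 1 / ((m : ℝ) - 1) to ℝ≥0 using (one_div_pos.2 hm_pred).le with p
  set t : ℝ := (n : ℝ) / m with ht
  calc Var[fun ω : Fin n → Fin m => (∑ i, hitProb p d (ballCount ω i)) * urnCount d ω; occ n m]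
      ≤ n * (p * (n + m * (d + 1))) ^ 2 :=
        variance_sum_hitProb_mul_urnCount_le (by lia) (by exact_mod_cast hp_one) d
    _ = n * (p * m * (t + (d + 1))) ^ 2 := by
        rw [ht]
        field_simp
    _ ≤ n * (2 * (t + (d + 1))) ^ 2 := by gcongr
    _ ≤ n * (2 ^ 2 * (2 * (t ^ 2 + (d + 1) ^ 2))) := by
        rw [mul_pow]
        gcongr
        exact add_sq_le
    _ ≤ n * (2 ^ 2 * (2 * ((d + 1) ^ 2 * t ^ 2 + (d + 1) ^ 2))) := by
        gcongr
        exact le_mul_of_one_le_left (sq_nonneg t) (one_le_pow₀ (by simp))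
    _ = 8 * (d + 1) ^ 2 * n * (1 + t ^ 2) := by ring

end Occupancy

/-- Lemma 3.3, bound (3.16): `Var(Σ_{i≠j} c_{n,m}(i,j)) ≤ C·n·[1 + (n/m)²]`. -/
theorem variance_cTerm_sum_le (d : ℕ) (hd : 2 ≤ d) :
    ∃ (n₁ : ℕ) (r₁ C : ℝ), 0 < r₁ ∧ 0 < C ∧
      ∀ n m : ℕ, n₁ ≤ n → 2 ≤ m → r₁ ≤ occR d n m →
        variance (fun ω : Fin n → Fin m =>
            ∑ i : Fin m, ∑ j : Fin m, if i ≠ j then cTerm d n m ω i j else 0)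
          (occ n m)
        ≤ C * n * (1 + ((n : ℝ) / m) ^ 2) := by
  refine ⟨0, 1, 8 * (d + 1) ^ 2, one_pos, by positivity, fun n m _ hm _ => ?_⟩
  exact variance_cTerm_sum_le_general d n hm
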